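/- Infratriangle inequality (norm −1 case): for all f, g ∈ ℤ[θ] one has |f + g|_θ ≤ θ²·max(|f|_θ, |g|_θ) and |f − g|_θ ≤ θ²·max(|f|_θ, |g|_θ). In particular |·|_θ is an infranorm on ℤ[θ] with constant ρ = θ². -/

import Mathlib

/-!
The idea is to describe `ℤ_θ` as a cut-and-project set. Writing `x'` for the Galois conjugate, the
nonnegative θ-integers are exactly the `x ∈ ℤ[θ]` with `x ≥ 0` and `x' ∈ (-1, θ)` (`InWindow`).

* Every admissible sum lies in the window (`inWindow_sum`): if `y' ∈ (-1, θ)` and `0 ≤ b ≤ a`, then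
  `(b + θy)' = b - y'/θ ∈ (-1, a + 1/θ) = (-1, θ)`.
* Conversely (`exists_digits`), the lowest digit of `x` in the window is read off from `x'`: it is
  `0` when `x' < 1/θ`, and it is `b ∈ {1, …, a}` when `b - 1 + 1/θ < x' < b + 1/θ`. Then
  `y = (x - b)/θ` is again in the window, and moreover `y' < θ - 1` if `b ≥ 1`, which says that the
  next digit is not `a`; this is admissibility. The process stops because `x` decreases by a factor
  `θ` at each step and the only window element in `[0, 1)` is `0`.

Multiplication by `θ²` divides conjugates by `θ²`. For `x, y` in the window, `(x + y)'` lies in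
`(-2, 2θ)` and `|(x - y)'| < 1 + θ`; since `θ² ≥ θ + 1 ≥ 2`, both `θ²(x + y)` and `±θ²(x - y)`
satisfy the window condition, so `θ²(ℤ_θ ± ℤ_θ) ⊆ ℤ_θ`. The inequality for the infranorm follows,
once one knows that `v` is an attained maximum (`isGreatest_vval`): a nonzero θ-integer has absolute
value at least `1`, and multiplication by a large power of `θ` brings any conjugate into `(-1, 1)`.
-/

noncomputable section

/-- The real quadratic unit `θ = (a + √(a²+4))/2`, the positive root of `θ² = aθ + 1`
(the norm `N(θ) = −1` case). -/
def theta (a : ℕ) : ℝ := ((a : ℝ) + Real.sqrt ((a : ℝ) ^ 2 + 4)) / 2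

/-- The Galois conjugate `θ' = −θ⁻¹`. -/
def thetaConj (a : ℕ) : ℝ := -(theta a)⁻¹

/-- Membership in the ring `ℤ[θ]`. -/
def inOK (a : ℕ) (x : ℝ) : Prop := ∃ p q : ℤ, x = (p : ℝ) + (q : ℝ) * theta a

/-- A finite integer sequence, supported in `[m, M]`, is admissible (norm `−1` case) if all its
entries lie in `{0, …, a}` and an entry equal to `a` is always followed (below) by a `0`. -/
def AdmissibleOn (a : ℕ) (m M : ℤ) (b : ℤ → ℤ) : Prop :=
  (∀ i, b i ≠ 0 → m ≤ i ∧ i ≤ M) ∧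
  (∀ i, 0 ≤ b i ∧ b i ≤ (a : ℤ)) ∧
  (∀ i, b i = (a : ℤ) → b (i - 1) = 0)

/-- The set `ℤ_θ` of θ-integers: signed sums `± Σ_{i=0}^{M} b_i θ^i` with `(b_i)` admissible. -/
def Ztheta (a : ℕ) : Set ℝ :=
  { x | ∃ (ε : ℤ) (M : ℤ) (b : ℤ → ℤ), (ε = 1 ∨ ε = -1) ∧ 0 ≤ M ∧
      AdmissibleOn a 0 M b ∧
      x = (ε : ℝ) * ∑ i ∈ Finset.Icc (0 : ℤ) M, (b i : ℝ) * theta a ^ i }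

/-- `v(x) = max { k : ℤ | x / θ^k ∈ ℤ_θ }` (as a supremum in `ℤ`). -/
def vval (a : ℕ) (x : ℝ) : ℤ := sSup { k : ℤ | x / theta a ^ k ∈ Ztheta a }

/-- The θ-adic infranorm `|x|_θ = θ^{−v(x)}`, with `|0|_θ = 0`. -/
def thNorm (a : ℕ) (x : ℝ) : ℝ := if x = 0 then 0 else theta a ^ (-vval a x)

/-- A sequence in `ℝ` is `|·|_θ`-Cauchy. -/
def IsThCauchy (a : ℕ) (x : ℕ → ℝ) : Prop :=
  ∀ ε : ℝ, 0 < ε → ∃ N : ℕ, ∀ i j : ℕ, N ≤ i → N ≤ j → thNorm a (x i - x j) < ε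

/-! ### The unit θ -/

lemma theta_sq (a : ℕ) : theta a * theta a = a * theta a + 1 := by
  have h := Real.mul_self_sqrt (show (0 : ℝ) ≤ (a : ℝ) ^ 2 + 4 by positivity)
  unfold theta
  nlinarith

lemma theta_pos (a : ℕ) : 0 < theta a := by
  have h := Real.sqrt_pos.2 (show (0 : ℝ) < (a : ℝ) ^ 2 + 4 by positivity)
  unfold theta
  positivity

/-- `θ - a = 1/θ`; below, `1/θ` is always written in this polynomial form. -/
lemma theta_mul_sub (a : ℕ) : theta a * (theta a - a) = 1 := by
  linarith [theta_sq a]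

lemma lt_theta (a : ℕ) : (a : ℝ) < theta a := by
  have h := theta_mul_sub a
  have h0 := theta_pos a
  by_contra hc
  nlinarith

lemma one_lt_theta {a : ℕ} (ha : 1 ≤ a) : 1 < theta a := by
  have : (1 : ℝ) ≤ a := by exact_mod_cast ha
  linarith [lt_theta a]

lemma theta_sub_lt_one {a : ℕ} (ha : 1 ≤ a) : theta a - a < 1 := by
  have h := theta_mul_sub a
  have h1 := one_lt_theta ha
  have h2 := lt_theta a
  nlinarith

lemma irrational_theta {a : ℕ} (ha : 1 ≤ a) : Irrational (theta a) := by
  have hs : Irrational (Real.sqrt ((a ^ 2 + 4 : ℕ) : ℝ)) := by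
    rw [irrational_sqrt_natCast_iff]
    rintro ⟨r, hr⟩
    -- `a² < r² = a² + 4 < (a + 2)²` forces `r = a + 1`, and then `2a = 3`.
    have h1 : a < r := by nlinarith
    have h2 : r < a + 2 := by nlinarith
    have h3 : r = a + 1 := by omega
    subst h3
    have : 2 * a = 3 := by nlinarith
    omega
  intro ⟨r, hr⟩
  apply hs
  refine ⟨2 * r - a, ?_⟩
  push_cast
  rw [hr]
  unfold theta
  ring

/-! ### Conjugates and the window -/

/-- `IsConj' a x x'` says that `x = p + qθ ∈ ℤ[θ]` and that `x' = p - q/θ` is its Galois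
conjugate. -/
def IsConj' (a : ℕ) (x x' : ℝ) : Prop :=
  ∃ p q : ℤ, x = p + q * theta a ∧ x' = p - q * (theta a - a)

lemma IsConj'.add {a : ℕ} {x x' y y' : ℝ} (hx : IsConj' a x x') (hy : IsConj' a y y') :
    IsConj' a (x + y) (x' + y') := by
  obtain ⟨p, q, rfl, rfl⟩ := hx
  obtain ⟨r, s, rfl, rfl⟩ := hy
  exact ⟨p + r, q + s, by push_cast; ring, by push_cast; ring⟩

lemma IsConj'.neg {a : ℕ} {x x' : ℝ} (hx : IsConj' a x x') : IsConj' a (-x) (-x') := by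
  obtain ⟨p, q, rfl, rfl⟩ := hx
  exact ⟨-p, -q, by push_cast; ring, by push_cast; ring⟩

lemma IsConj'.intCast (a : ℕ) (n : ℤ) : IsConj' a n n := ⟨n, 0, by simp, by simp⟩

lemma IsConj'.mul_theta {a : ℕ} {x x' : ℝ} (hx : IsConj' a x x') :
    IsConj' a (theta a * x) (-(theta a - a) * x') := by
  obtain ⟨p, q, rfl, rfl⟩ := hx
  refine ⟨q, p + a * q, ?_, ?_⟩ <;> push_cast
  · linear_combination (q : ℝ) * theta_sq a
  · linear_combination (q : ℝ) * theta_sq a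

lemma IsConj'.div_theta {a : ℕ} {x x' : ℝ} (hx : IsConj' a x x') :
    IsConj' a ((theta a - a) * x) (-theta a * x') := by
  obtain ⟨p, q, rfl, rfl⟩ := hx
  refine ⟨q - a * p, p, ?_, ?_⟩ <;> push_cast
  · linear_combination (q : ℝ) * theta_sq a
  · linear_combination (q : ℝ) * theta_sq a

lemma IsConj'.pow_mul {a : ℕ} {x x' : ℝ} (hx : IsConj' a x x') (n : ℕ) :
    IsConj' a (theta a ^ n * x) ((-(theta a - a)) ^ n * x') := by
  induction n with
  | zero => simpa using hx
  | succ n ih =>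
    have := ih.mul_theta
    rw [pow_succ', pow_succ', mul_assoc, mul_assoc]
    exact this

/-- `x ≥ 0` is an element of `ℤ[θ]` whose conjugate `x'` lies in `(-1, θ)`. -/
def InWindow (a : ℕ) (x x' : ℝ) : Prop :=
  IsConj' a x x' ∧ 0 ≤ x ∧ -1 < x' ∧ x' < theta a

/-- Discreteness: the difference `x - x'` is an integer multiple of `θ + 1/θ ≥ 2`, and the
hypotheses confine it to `(-θ, 2)`; hence it vanishes, so `x` is an integer in `(-1, 1)`. -/
lemma IsConj'.eq_zero {a : ℕ} (ha : 1 ≤ a) {x x' : ℝ} (hx : IsConj' a x x')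
    (h1 : -1 < x) (h2 : x < 1) (h3 : -1 < x') (h4 : -theta a < x - x') : x = 0 := by
  obtain ⟨p, q, rfl, rfl⟩ := hx
  have ht := one_lt_theta ha
  have hu := lt_theta a
  have htu := theta_mul_sub a
  have hq : q = 0 := by
    rcases lt_trichotomy q 0 with h | h | h
    · have : (q : ℝ) ≤ -1 := by exact_mod_cast (by omega : q ≤ -1)
      nlinarith
    · exact h
    · have : (1 : ℝ) ≤ q := by exact_mod_cast h
      nlinarith [sq_nonneg (a : ℝ)]
  subst hq
  simp only [Int.cast_zero, zero_mul, add_zero] at h1 h2 ⊢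
  have h5 : -1 < p := by exact_mod_cast h1
  have h6 : p < 1 := by exact_mod_cast h2
  have : p = 0 := by omega
  simp [this]

/-- The breakpoints `n + 1/θ` separating the lowest digits are never conjugates of nonnegative
elements: they are conjugate to `n - θ`. -/
lemma IsConj'.ne_breakpoint {a : ℕ} (ha : 1 ≤ a) {x x' : ℝ} (hx : IsConj' a x x') (h0 : 0 ≤ x)
    {n : ℤ} (hn : n ≤ a) : x' ≠ n + (theta a - a) := by
  obtain ⟨p, q, rfl, rfl⟩ := hx
  intro h
  have hq : q + 1 = 0 := by
    by_contra hq
    refine (irrational_theta ha).intCast_mul hq ⟨(p - n + a * (q + 1) : ℤ), ?_⟩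
    push_cast
    linear_combination h
  have hq' : (q : ℝ) = -1 := by exact_mod_cast (by omega : q = -1)
  rw [hq'] at h h0
  have hn' : (n : ℝ) ≤ a := by exact_mod_cast hn
  linarith [lt_theta a]

/-! ### θ-integers are the window elements -/

lemma sum_Icc_eq_sum_range (f : ℤ → ℝ) (n : ℕ) :
    ∑ i ∈ Finset.Icc (0 : ℤ) n, f i = ∑ i ∈ Finset.range (n + 1), f i := by
  induction n with
  | zero => simp
  | succ n ih =>
    rw [Finset.sum_range_succ, ← ih]
    have : Finset.Icc (0 : ℤ) ((n + 1 : ℕ) : ℤ) =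
        insert ((n + 1 : ℕ) : ℤ) (Finset.Icc (0 : ℤ) n) := by
      ext i
      simp only [Finset.mem_Icc, Finset.mem_insert]
      omega
    rw [this, Finset.sum_insert (by simp), add_comm]

/-- Only the bounds `0 ≤ b_i ≤ a` on the digits matter here. -/
lemma inWindow_sum {a : ℕ} (ha : 1 ≤ a) (n : ℕ) (b : ℕ → ℤ) (hb : ∀ i, 0 ≤ b i ∧ b i ≤ (a : ℤ)) :
    ∃ x', InWindow a (∑ i ∈ Finset.range n, (b i : ℝ) * theta a ^ i) x' := by
  have ht := one_lt_theta ha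
  have hu := lt_theta a
  have htu := theta_mul_sub a
  induction n generalizing b with
  | zero => exact ⟨0, by simpa using IsConj'.intCast a 0, by simp, by norm_num, by linarith⟩
  | succ n ih =>
    obtain ⟨y', hy, h0, h1, h2⟩ := ih (fun i => b (i + 1)) (fun i => hb (i + 1))
    have hb0 : (0 : ℝ) ≤ b 0 := by exact_mod_cast (hb 0).1
    have hba : (b 0 : ℝ) ≤ a := by exact_mod_cast (hb 0).2
    have hs : ∑ i ∈ Finset.range (n + 1), (b i : ℝ) * theta a ^ i
        = theta a * ∑ i ∈ Finset.range n, (b (i + 1) : ℝ) * theta a ^ i + b 0 := by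
      rw [Finset.sum_range_succ', Finset.mul_sum]
      simp only [pow_zero, mul_one, add_left_inj]
      exact Finset.sum_congr rfl fun i _ => by ring
    rw [hs]
    refine ⟨_, hy.mul_theta.add (IsConj'.intCast a (b 0)), by positivity, ?_, ?_⟩
    · nlinarith
    · nlinarith

/-- Reading off the digits from the lowest one up. The last clause records that the lowest digit
is `a` only if `x' ≥ θ - 1`. -/
lemma exists_digits {a : ℕ} (ha : 1 ≤ a) (n : ℕ) {x x' : ℝ} (hx : InWindow a x x')
    (hn : x < theta a ^ n) :
    ∃ (M : ℕ) (b : ℤ → ℤ), AdmissibleOn a 0 M b ∧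
      x = ∑ i ∈ Finset.range (M + 1), (b i : ℝ) * theta a ^ i ∧
      (x' < theta a - 1 → b 0 ≠ a) := by
  have ht := one_lt_theta ha
  have hu := lt_theta a
  have hu1 := theta_sub_lt_one ha
  have htu := theta_mul_sub a
  induction n generalizing x x' with
  | zero =>
    obtain ⟨hc, h0, h1, h2⟩ := hx
    have hz := hc.eq_zero ha (by linarith) (by simpa using hn) h1 (by linarith)
    have ha' : (a : ℤ) ≠ 0 := by exact_mod_cast (by omega : a ≠ 0)
    exact ⟨0, fun _ => 0, ⟨by simp, by simp, by simp⟩, by simp [hz], fun _ => ha'.symm⟩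
  | succ n ih =>
    obtain ⟨hc, h0, h1, h2⟩ := hx
    obtain ⟨d, hd0, hda, hdl, hdu, hd1⟩ : ∃ d : ℤ, 0 ≤ d ∧ d ≤ a ∧ (d : ℝ) - 1 < x' ∧
        x' < d + (theta a - a) ∧ (d ≠ 0 → (d : ℝ) - 1 + (theta a - a) < x') := by
      by_cases h : x' < theta a - a
      · exact ⟨0, le_rfl, by positivity, by simpa using h1, by simpa using h, by simp⟩
      · push Not at h
        refine ⟨⌊x' - (theta a - a)⌋ + 1, ?_, ?_, ?_, ?_, ?_⟩
        · have : 0 ≤ ⌊x' - (theta a - a)⌋ := Int.floor_nonneg.2 (by linarith)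
          omega
        · have : ⌊x' - (theta a - a)⌋ < a := Int.floor_lt.2 (by push_cast; linarith)
          omega
        · push_cast
          linarith [Int.floor_le (x' - (theta a - a))]
        · push_cast
          linarith [Int.lt_floor_add_one (x' - (theta a - a))]
        · intro _
          push_cast
          have hle := Int.floor_le (x' - (theta a - a))
          have hlt : ⌊x' - (theta a - a)⌋ < a := Int.floor_lt.2 (by push_cast; linarith)
          have hne := hc.ne_breakpoint ha h0 hlt.le
          rcases lt_or_eq_of_le hle with h' | h'
          · linarith
          · exact absurd (by linarith) hne
    have hd0' : (0 : ℝ) ≤ d := by exact_mod_cast hd0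
    have hda' : (d : ℝ) ≤ a := by exact_mod_cast hda
    have hy : IsConj' a ((theta a - a) * (x + (-d : ℤ))) (-theta a * (x' + (-d : ℤ))) :=
      (hc.add (IsConj'.intCast a (-d))).div_theta
    set y := (theta a - a) * (x + (-d : ℤ)) with hydef
    set y' := -theta a * (x' + (-d : ℤ)) with hydef'
    push_cast at hydef hydef'
    have hxy : x = theta a * y + d := by
      rw [hydef]
      linear_combination (-(x - d)) * htu
    have hyl : -1 < y' := by rw [hydef']; nlinarith
    have hyu : y' < theta a := by rw [hydef']; nlinarith
    have hyd : d ≠ 0 → y' < theta a - 1 := by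
      intro h
      have := hd1 h
      rw [hydef']
      nlinarith
    have hy0 : 0 ≤ y := by
      by_cases h : d = 0
      · rw [hydef, h]
        simp only [Int.cast_zero, neg_zero, add_zero]
        exact mul_nonneg (by linarith) h0
      · by_contra hneg
        push Not at hneg
        -- `y > -a/θ > -1`, so the smallness criterion forces `y = 0`.
        have hym : -1 < y := by nlinarith
        have := hy.eq_zero ha hym (by linarith) hyl (by linarith [hyd h])
        linarith
    have hyn : y < theta a ^ n := by
      rw [pow_succ'] at hn
      have : theta a * y < theta a * theta a ^ n := by linarith
      exact lt_of_mul_lt_mul_left this (by linarith)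
    obtain ⟨M, b, ⟨hb1, hb2, hb3⟩, hsum, hb0⟩ := ih ⟨hy, hy0, hyl, hyu⟩ hyn
    have hbneg : ∀ i < 0, b i = 0 := fun i hi => by
      by_contra h
      have := (hb1 i h).1
      omega
    refine ⟨M + 1, fun i => if i = 0 then d else b (i - 1), ⟨?_, ?_, ?_⟩, ?_, ?_⟩
    · intro i hi
      dsimp only at hi
      split_ifs at hi with h
      · subst h
        exact ⟨le_rfl, by positivity⟩
      · have := hb1 _ hi
        push_cast
        omega
    · intro i
      dsimp only
      split_ifs
      · exact ⟨hd0, hda⟩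
      · exact hb2 _
    · intro i hi
      dsimp only at hi ⊢
      split_ifs at hi with h
      · subst h
        rw [if_neg (by norm_num)]
        exact hbneg _ (by norm_num)
      · split_ifs with h'
        · have : i = 1 := by omega
          subst this
          by_contra hd
          exact hb0 (hyd hd) (by simpa using hi)
        · exact hb3 _ hi
    · rw [Finset.sum_range_succ', hxy, hsum, Finset.mul_sum]
      congr 1
      · refine Finset.sum_congr rfl fun i _ => ?_
        have h1 : ((i + 1 : ℕ) : ℤ) ≠ 0 := by positivity
        have h2 : ((i + 1 : ℕ) : ℤ) - 1 = i := by push_cast; ring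
        simp only [if_neg h1, h2]
        ring
      · simp
    · intro h
      simp only [if_true]
      intro hda''
      have hd : (d : ℝ) = a := by exact_mod_cast hda''
      have := hd1 (by omega)
      linarith

/-- The θ-integers are, up to sign, the elements of the window. -/
lemma mem_Ztheta_iff {a : ℕ} (ha : 1 ≤ a) {x : ℝ} :
    x ∈ Ztheta a ↔ ∃ x', InWindow a x x' ∨ InWindow a (-x) (-x') := by
  constructor
  · rintro ⟨ε, M, b, hε, hM, ⟨_, hb, _⟩, rfl⟩
    lift M to ℕ using hM
    rw [sum_Icc_eq_sum_range (fun i => (b i : ℝ) * theta a ^ i)]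
    simp only [zpow_natCast]
    obtain ⟨s', hs⟩ := inWindow_sum ha (M + 1) (fun i => b i) (fun i => hb i)
    rcases hε with rfl | rfl
    · exact ⟨s', Or.inl (by simpa using hs)⟩
    · exact ⟨-s', Or.inr (by simpa using hs)⟩
  · have key : ∀ {y y' : ℝ}, InWindow a y y' → ∃ (M : ℤ) (b : ℤ → ℤ), 0 ≤ M ∧
        AdmissibleOn a 0 M b ∧ y = ∑ i ∈ Finset.Icc (0 : ℤ) M, (b i : ℝ) * theta a ^ i := by
      intro y y' hy
      obtain ⟨n, hn⟩ := pow_unbounded_of_one_lt y (one_lt_theta ha)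
      obtain ⟨M, b, hb, hs, _⟩ := exists_digits ha n hy hn
      refine ⟨M, b, by positivity, hb, ?_⟩
      rw [sum_Icc_eq_sum_range (fun i => (b i : ℝ) * theta a ^ i), hs]
      simp only [zpow_natCast]
    rintro ⟨x', hx | hx⟩
    · obtain ⟨M, b, hM, hb, hs⟩ := key hx
      exact ⟨1, M, b, Or.inl rfl, hM, hb, by simpa using hs⟩
    · obtain ⟨M, b, hM, hb, hs⟩ := key hx
      refine ⟨-1, M, b, Or.inr rfl, hM, hb, ?_⟩
      rw [← hs]
      simp

/-! ### Sums of θ-integers -/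

lemma neg_mem_Ztheta {a : ℕ} {x : ℝ} (hx : x ∈ Ztheta a) : -x ∈ Ztheta a := by
  obtain ⟨ε, M, b, hε, hM, hb, rfl⟩ := hx
  refine ⟨-ε, M, b, ?_, hM, hb, by push_cast; ring⟩
  rcases hε with rfl | rfl <;> simp

lemma mem_Ztheta_of_abs_conj_lt {a : ℕ} (ha : 1 ≤ a) {x x' : ℝ} (hx : IsConj' a x x')
    (h1 : -1 < x') (h2 : x' < 1) : x ∈ Ztheta a := by
  have ht := one_lt_theta ha
  rw [mem_Ztheta_iff ha]
  rcases le_total 0 x with h | h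
  · exact ⟨x', Or.inl ⟨hx, h, h1, by linarith⟩⟩
  · exact ⟨x', Or.inr ⟨hx.neg, by linarith, by linarith, by linarith⟩⟩

lemma theta_mul_mem {a : ℕ} (ha : 1 ≤ a) {x : ℝ} (hx : x ∈ Ztheta a) :
    theta a * x ∈ Ztheta a := by
  have htu := theta_mul_sub a
  have hu := lt_theta a
  have hu1 := theta_sub_lt_one ha
  have main : ∀ {y y' : ℝ}, InWindow a y y' → theta a * y ∈ Ztheta a := by
    rintro y y' ⟨hc, h0, h1, h2⟩
    exact mem_Ztheta_of_abs_conj_lt ha hc.mul_theta (by nlinarith) (by nlinarith)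
  obtain ⟨x', h | h⟩ := (mem_Ztheta_iff ha).1 hx
  · exact main h
  · simpa using neg_mem_Ztheta (main h)

/-- `θ²(ℤ_θ + ℤ_θ) ⊆ ℤ_θ`. -/
lemma theta_sq_mul_add_mem {a : ℕ} (ha : 1 ≤ a) {x y : ℝ} (hx : x ∈ Ztheta a)
    (hy : y ∈ Ztheta a) : theta a ^ 2 * (x + y) ∈ Ztheta a := by
  have ht := one_lt_theta ha
  have htu := theta_mul_sub a
  have hu := lt_theta a
  have hu1 := theta_sub_lt_one ha
  have ha' : (1 : ℝ) ≤ a := by exact_mod_cast ha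
  -- `u = 1/θ` satisfies `u + u² ≤ 1`, hence `2u² ≤ 1`.
  have huu : (theta a - a) + (theta a - a) ^ 2 ≤ 1 := by nlinarith
  have huu2 : 2 * (theta a - a) ^ 2 ≤ 1 := by nlinarith
  have huut : (theta a - a) ^ 2 * theta a = theta a - a := by
    linear_combination (theta a - a) * htu
  have same : ∀ {x x' y y' : ℝ}, InWindow a x x' → InWindow a y y' →
      theta a ^ 2 * (x + y) ∈ Ztheta a := by
    rintro x x' y y' ⟨hxc, hx0, hx1, hx2⟩ ⟨hyc, hy0, hy1, hy2⟩
    rw [mem_Ztheta_iff ha]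
    refine ⟨_, Or.inl ⟨(hxc.add hyc).pow_mul 2, by positivity, ?_, ?_⟩⟩
    · rw [neg_sq]
      nlinarith [sq_pos_of_pos (sub_pos.2 hu)]
    · rw [neg_sq]
      nlinarith [sq_pos_of_pos (sub_pos.2 hu)]
  have diff : ∀ {x x' y y' : ℝ}, InWindow a x x' → InWindow a y y' →
      theta a ^ 2 * (x - y) ∈ Ztheta a := by
    rintro x x' y y' ⟨hxc, hx0, hx1, hx2⟩ ⟨hyc, hy0, hy1, hy2⟩
    have := (hxc.add hyc.neg).pow_mul 2
    rw [neg_sq] at this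
    rw [sub_eq_add_neg]
    have hp := sq_pos_of_pos (sub_pos.2 hu)
    exact mem_Ztheta_of_abs_conj_lt ha this (by nlinarith) (by nlinarith)
  obtain ⟨x', hx | hx⟩ := (mem_Ztheta_iff ha).1 hx <;>
  obtain ⟨y', hy | hy⟩ := (mem_Ztheta_iff ha).1 hy
  · exact same hx hy
  · simpa using diff hx hy
  · have := diff hy hx
    rwa [sub_neg_eq_add, add_comm] at this
  · have := neg_mem_Ztheta (same hx hy)
    convert this using 1
    ring

/-! ### The valuation -/

lemma one_le_abs_of_mem {a : ℕ} (ha : 1 ≤ a) {x : ℝ} (hx : x ∈ Ztheta a) (h0 : x ≠ 0) :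
    1 ≤ |x| := by
  have main : ∀ {y y' : ℝ}, InWindow a y y' → y ≠ 0 → 1 ≤ y := by
    rintro y y' ⟨hc, h0, h1, h2⟩ hne
    by_contra h
    push Not at h
    exact hne (hc.eq_zero ha (by linarith) h h1 (by linarith))
  obtain ⟨x', h | h⟩ := (mem_Ztheta_iff ha).1 hx
  · exact (main h h0).trans (le_abs_self x)
  · exact (main h (neg_ne_zero.2 h0)).trans (neg_le_abs x)

lemma div_zpow_mem_of_le {a : ℕ} (ha : 1 ≤ a) {x : ℝ} {k l : ℤ} (hkl : k ≤ l)
    (hl : x / theta a ^ l ∈ Ztheta a) : x / theta a ^ k ∈ Ztheta a := by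
  have ht := theta_pos a
  induction k, hkl using Int.leInductionDown with
  | base => exact hl
  | pred n _ ih =>
    have := theta_mul_mem ha ih
    rw [zpow_sub_one₀ ht.ne']
    convert this using 1
    field_simp

lemma bddAbove_val {a : ℕ} (ha : 1 ≤ a) {x : ℝ} (h0 : x ≠ 0) :
    BddAbove { k : ℤ | x / theta a ^ k ∈ Ztheta a } := by
  have ht := theta_pos a
  obtain ⟨n, hn⟩ := pow_unbounded_of_one_lt |x| (one_lt_theta ha)
  refine ⟨n, fun k hk => ?_⟩
  have h1 := one_le_abs_of_mem ha hk (div_ne_zero h0 (zpow_pos ht k).ne')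
  rw [abs_div, abs_of_pos (zpow_pos ht k), one_le_div (zpow_pos ht k)] at h1
  have h2 : theta a ^ k < theta a ^ (n : ℤ) := by
    rw [zpow_natCast]
    linarith
  exact ((zpow_lt_zpow_iff_right₀ (one_lt_theta ha)).1 h2).le

/-- Elements of `ℤ[θ]` have finite θ-expansions: a large power of `θ` makes the conjugate small. -/
lemma nonempty_val {a : ℕ} (ha : 1 ≤ a) {x : ℝ} (hx : inOK a x) :
    { k : ℤ | x / theta a ^ k ∈ Ztheta a }.Nonempty := by
  obtain ⟨p, q, hpq⟩ := hx
  have hc : IsConj' a x (p - q * (theta a - a)) := ⟨p, q, hpq, rfl⟩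
  generalize (p : ℝ) - q * (theta a - a) = x' at hc
  have hu := lt_theta a
  obtain ⟨n, hn⟩ := exists_pow_lt_of_lt_one (show (0 : ℝ) < 1 / (|x'| + 1) by positivity)
    (theta_sub_lt_one ha)
  rw [lt_div_iff₀ (by positivity)] at hn
  have habs : |(-(theta a - a)) ^ n * x'| < 1 := by
    rw [abs_mul, abs_pow, abs_neg, abs_of_pos (sub_pos.2 hu)]
    have := pow_pos (sub_pos.2 hu) n
    nlinarith
  refine ⟨-n, ?_⟩
  have := mem_Ztheta_of_abs_conj_lt ha (hc.pow_mul n) (abs_lt.1 habs).1 (abs_lt.1 habs).2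
  simpa [div_eq_mul_inv, mul_comm] using this

/-- For `x ≠ 0` in `ℤ[θ]`, `v(x)` is an attained maximum rather than a junk supremum. -/
lemma isGreatest_vval {a : ℕ} (ha : 1 ≤ a) {x : ℝ} (hx : inOK a x) (h0 : x ≠ 0) :
    IsGreatest { k : ℤ | x / theta a ^ k ∈ Ztheta a } (vval a x) :=
  ⟨Int.csSup_mem (nonempty_val ha hx) (bddAbove_val ha h0),
    fun _ hk => le_csSup (bddAbove_val ha h0) hk⟩

lemma inOK_neg {a : ℕ} {x : ℝ} (hx : inOK a x) : inOK a (-x) := by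
  obtain ⟨p, q, rfl⟩ := hx
  exact ⟨-p, -q, by push_cast; ring⟩

lemma thNorm_nonneg (a : ℕ) (x : ℝ) : 0 ≤ thNorm a x := by
  unfold thNorm
  split_ifs
  · exact le_rfl
  · exact (zpow_pos (theta_pos a) _).le

lemma thNorm_neg (a : ℕ) (x : ℝ) : thNorm a (-x) = thNorm a x := by
  have : vval a (-x) = vval a x := by
    unfold vval
    congr 1
    ext k
    simp only [Set.mem_ofPred_eq, neg_div]
    exact ⟨fun h => by simpa using neg_mem_Ztheta h, neg_mem_Ztheta⟩
  simp [thNorm, this]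

lemma thNorm_add_le {a : ℕ} (ha : 1 ≤ a) {f g : ℝ} (hf : inOK a f) (hg : inOK a g) :
    thNorm a (f + g) ≤ theta a ^ 2 * max (thNorm a f) (thNorm a g) := by
  have ht := theta_pos a
  have ht1 := one_lt_theta ha
  have hself : ∀ z : ℝ, thNorm a z ≤ theta a ^ 2 * thNorm a z := fun z =>
    le_mul_of_one_le_left (thNorm_nonneg a z) (one_le_pow₀ ht1.le)
  by_cases hf0 : f = 0
  · rw [hf0, zero_add]
    exact (hself g).trans (by gcongr; exact le_max_right _ _)
  by_cases hg0 : g = 0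
  · rw [hg0, add_zero]
    exact (hself f).trans (by gcongr; exact le_max_left _ _)
  by_cases hs : f + g = 0
  · rw [hs, thNorm, if_pos rfl]
    exact mul_nonneg (by positivity) ((thNorm_nonneg a f).trans (le_max_left _ _))
  set k := min (vval a f) (vval a g) with hk
  have hfk := div_zpow_mem_of_le ha (min_le_left (vval a f) (vval a g)) (isGreatest_vval ha hf hf0).1
  have hgk := div_zpow_mem_of_le ha (min_le_right (vval a f) (vval a g))
    (isGreatest_vval ha hg hg0).1
  have hmem : (f + g) / theta a ^ (k - 2) ∈ Ztheta a := by
    have := theta_sq_mul_add_mem ha hfk hgk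
    rw [zpow_sub₀ ht.ne']
    convert this using 1
    rw [← hk]
    field_simp
  have hv : k - 2 ≤ vval a (f + g) := le_csSup (bddAbove_val ha hs) hmem
  have hmax : theta a ^ (-k) ≤ max (thNorm a f) (thNorm a g) := by
    simp only [thNorm, if_neg hf0, if_neg hg0]
    rcases min_choice (vval a f) (vval a g) with h | h
    · rw [hk, h]
      exact le_max_left _ _
    · rw [hk, h]
      exact le_max_right _ _
  calc thNorm a (f + g) = theta a ^ (-vval a (f + g)) := by rw [thNorm, if_neg hs]
    _ ≤ theta a ^ (2 + -k) := zpow_le_zpow_right₀ ht1.le (by omega)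
    _ = theta a ^ 2 * theta a ^ (-k) := by rw [zpow_add₀ ht.ne']; norm_cast
    _ ≤ _ := by gcongr

/-- Infratriangle inequality, norm `−1` case. For all `f, g ∈ ℤ[θ]`,
`|f ± g|_θ ≤ θ² · max(|f|_θ, |g|_θ)`; thus `|·|_θ` is an infranorm with constant `ρ = θ²`. -/
theorem infratriangle_neg_one (a : ℕ) (ha : 1 ≤ a) (f g : ℝ)
    (hf : inOK a f) (hg : inOK a g) :
    thNorm a (f + g) ≤ theta a ^ 2 * max (thNorm a f) (thNorm a g) ∧
    thNorm a (f - g) ≤ theta a ^ 2 * max (thNorm a f) (thNorm a g) := by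
  refine ⟨thNorm_add_le ha hf hg, ?_⟩
  have := thNorm_add_le ha hf (inOK_neg hg)
  rwa [thNorm_neg, ← sub_eq_add_neg] at this
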